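/- arXiv:1805.00248 — 3 statements merged into one kernel-verified Lean document; each statement's English description precedes it below -/
import Mathlib

section
/- The limit lim_{ε→0⁺} ∫_{ℝⁿ} exp(−ε‖x‖² + (i/2)⟨x,Sx⟩) dx exists and equals ∏_{k=1}^n √(2π/|λ_k|)·e^{iπ·sgn(λ_k)/4} = (2π)^{n/2}·|det S|^{−1/2}·e^{iπ·σ(S)/4}, where λ₁,…,λ_n are the eigenvalues of S listed with multiplicity and σ(S) is the signature of S (the number of positive eigenvalues minus the number of negative eigenvalues). Equivalently, the normalization constant Z of the Gauss-type measure (1/Z)exp((i/2)⟨x,Sx⟩)dx equals ∏_{k=1}^n √(2π)·(−iλ_k)^{−1/2}, with principal square roots. -/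
open MeasureTheory Matrix Real

lemma aux_exp_sq (l : ℝ) (hl : l ≠ 0) :
    Complex.exp (Complex.I * (π : ℂ) * ((Real.sign l : ℝ) : ℂ) / 4) ^ 2
      = Complex.I * ((Real.sign l : ℝ) : ℂ) := by
  rw [← Complex.exp_nat_mul]
  rcases lt_or_gt_of_ne hl with h | h
  · rw [Real.sign_of_neg h]
    have : ((2 : ℕ) : ℂ) * (Complex.I * (π : ℂ) * (((-1 : ℝ)) : ℂ) / 4) = -(π / 2 * Complex.I) := by
      push_cast; ring
    rw [this, Complex.exp_neg, Complex.exp_pi_div_two_mul_I]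
    simp
  · rw [Real.sign_of_pos h]
    have : ((2 : ℕ) : ℂ) * (Complex.I * (π : ℂ) * (((1 : ℝ)) : ℂ) / 4) = (π / 2 * Complex.I) := by
      push_cast; ring
    rw [this, Complex.exp_pi_div_two_mul_I]
    simp

lemma aux_exp_re (l : ℝ) :
    0 < (Complex.exp (Complex.I * (π : ℂ) * ((Real.sign l : ℝ) : ℂ) / 4)).re := by
  have : Complex.I * (π : ℂ) * ((Real.sign l : ℝ) : ℂ) / 4
      = ((π * Real.sign l / 4 : ℝ) : ℂ) * Complex.I := by push_cast; ring
  rw [this, Complex.exp_ofReal_mul_I_re]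
  apply Real.cos_pos_of_mem_Ioo
  rcases Real.sign_apply_eq l with h | h | h <;> rw [h] <;> constructor <;> linarith [Real.pi_pos]

lemma aux_sign_mul (l : ℝ) : ((Real.sign l : ℝ) : ℂ) * (|l| : ℝ) = l := by
  norm_cast
  rcases lt_trichotomy l 0 with h | h | h
  · rw [Real.sign_of_neg h, abs_of_neg h]; ring
  · simp [h]
  · rw [Real.sign_of_pos h, abs_of_pos h]; ring

lemma aux_sign_sq (l : ℝ) (hl : l ≠ 0) : ((Real.sign l : ℝ) : ℂ) * ((Real.sign l : ℝ) : ℂ) = 1 := by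
  rcases Real.sign_apply_eq_of_ne_zero l hl with h | h <;> rw [h] <;> simp

lemma aux_one (l : ℝ) (hl : l ≠ 0) :
    ((π : ℂ) / (-(Complex.I * l / 2))) ^ (1 / 2 : ℂ) = (Real.sqrt (2 * π / |l|) : ℂ) *
        Complex.exp (Complex.I * (π : ℂ) * ((Real.sign l : ℝ) : ℂ) / 4) := by
  have habs : 0 < |l| := abs_pos.mpr hl
  have h : ((π : ℂ) / (-(Complex.I * l / 2))) = ((Real.sqrt (2 * π / |l|) : ℂ) *
        Complex.exp (Complex.I * (π : ℂ) * ((Real.sign l : ℝ) : ℂ) / 4)) ^ 2 := by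
    rw [mul_pow, aux_exp_sq l hl, ← Complex.ofReal_pow, Real.sq_sqrt (by positivity)]
    have h1 : ((|l| : ℝ) : ℂ) ≠ 0 := by exact_mod_cast habs.ne'
    have h2 : (l : ℂ) ≠ 0 := by exact_mod_cast hl
    have h3 := aux_sign_mul l
    have h4 := aux_sign_sq l hl
    rw [div_eq_iff (by simp [hl])]
    push_cast
    field_simp
    rw [← h3]
    linear_combination ((|l|:ℝ) : ℂ) * (Complex.I_sq) + (Complex.I^2 * (|l|:ℝ)) * h4
  rw [h, one_div, Complex.sq_cpow_two_inv]
  rw [Complex.re_ofReal_mul]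
  exact mul_pos (Real.sqrt_pos.mpr (by positivity)) (aux_exp_re l)

lemma aux_two (l : ℝ) (hl : l ≠ 0) :
    (Real.sqrt (2 * π / |l|) : ℂ) *
        Complex.exp (Complex.I * (π : ℂ) * ((Real.sign l : ℝ) : ℂ) / 4) =
    (Real.sqrt (2 * π) : ℂ) * (-Complex.I * (l : ℂ)) ^ (-(1 / 2 : ℂ)) := by
  have habs : 0 < |l| := abs_pos.mpr hl
  have h : (-Complex.I * (l : ℂ)) = ((Real.sqrt |l| : ℂ) *
      (Complex.exp (Complex.I * (π : ℂ) * ((Real.sign l : ℝ) : ℂ) / 4))⁻¹) ^ 2 := by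
    rw [mul_pow, inv_pow, aux_exp_sq l hl, ← Complex.ofReal_pow, Real.sq_sqrt (by positivity)]
    have h3 := aux_sign_mul l
    have h4 := aux_sign_sq l hl
    have h5 : ((Real.sign l : ℝ) : ℂ) ≠ 0 := left_ne_zero_of_mul_eq_one h4
    rw [← div_eq_mul_inv, eq_div_iff (mul_ne_zero Complex.I_ne_zero h5), ← h3]
    linear_combination (-(|l|:ℝ) * ((Real.sign l : ℝ) : ℂ)^2 : ℂ) * (Complex.I_sq) + ((|l|:ℝ)) * h4
  rw [h, one_div, Complex.cpow_neg, Complex.sq_cpow_two_inv, Real.sqrt_div (by positivity)]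
  · push_cast
    rw [mul_inv, inv_inv]
    ring
  · rw [Complex.re_ofReal_mul, Complex.inv_re]
    exact mul_pos (Real.sqrt_pos.mpr (by positivity)) (div_pos (aux_exp_re l) (by
      rw [Complex.normSq_pos]; exact Complex.exp_ne_zero _))

lemma aux_lim (l : ℝ) (hl : l ≠ 0) :
    Filter.Tendsto (fun ε : ℝ => ((π : ℂ) / ((ε : ℂ) + -(Complex.I * l / 2))) ^ (1 / 2 : ℂ))
      (nhdsWithin 0 (Set.Ioi 0))
      (nhds ((Real.sqrt (2 * π / |l|) : ℂ) *
        Complex.exp (Complex.I * (π : ℂ) * ((Real.sign l : ℝ) : ℂ) / 4))) := by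
  rw [← aux_one l hl]
  have hne : -(Complex.I * l / 2) ≠ 0 := by simp [hl]
  have : ContinuousAt (fun ε : ℝ => ((π : ℂ) / ((ε : ℂ) + -(Complex.I * l / 2))) ^ (1 / 2 : ℂ)) 0 := by
    refine ContinuousAt.cpow ?_ continuousAt_const ?_
    · apply ContinuousAt.div (by fun_prop) (by fun_prop)
      simpa using hl
    · right
      simp [Complex.div_im, hl, Real.pi_ne_zero]
  have h2 := this.tendsto
  simp only [Complex.ofReal_zero, zero_add] at h2
  exact h2.mono_left nhdsWithin_le_nhds

lemma aux_int (n : ℕ) (S : Matrix (Fin n) (Fin n) ℝ) 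
    (lam : Fin n → ℝ) (O : Matrix (Fin n) (Fin n) ℝ)
    (hO : O * Oᵀ = 1) (hdiag : S = O * Matrix.diagonal lam * Oᵀ) (ε : ℝ) (hε : 0 < ε) :
    ∫ x : Fin n → ℝ,
        Complex.exp (((-(ε * ∑ i, x i ^ 2) : ℝ) : ℂ) +
          Complex.I / 2 * ((x ⬝ᵥ S.mulVec x : ℝ) : ℂ)) =
     ∏ k, ((π : ℂ) / ((ε : ℂ) + -(Complex.I * lam k / 2))) ^ (1 / 2 : ℂ) := by
  have hO' : Oᵀ * O = 1 := mul_eq_one_comm.mp hO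
  have hdet : O.det * O.det = 1 := by
    have := congrArg Matrix.det hO
    simpa using this
  have habs : |O.det| = 1 := by
    rw [← sq_eq_sq₀ (abs_nonneg _) zero_le_one, sq_abs]; nlinarith
  have hmap := Real.map_matrix_volume_pi_eq_smul_volume_pi (M := O)
    (by intro h; simp [h] at hdet)
  rw [abs_inv, habs] at hmap
  simp only [inv_one, ENNReal.ofReal_one, one_smul] at hmap
  have hcont : Continuous (toLin' O) := LinearMap.continuous_of_finiteDimensional _
  have h1 := GaussianFourier.integral_cexp_neg_sum_mul_add (b := fun k => ((ε : ℂ) + -(Complex.I * lam k / 2)))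
    (by intro k; simpa using hε) (fun _ => 0)
  simp only [zero_mul, Finset.sum_const_zero, add_zero, ne_eq, OfNat.ofNat_ne_zero,
    not_false_eq_true, zero_pow, zero_div, Complex.exp_zero, mul_one] at h1
  rw [← h1]
  conv_lhs => rw [← hmap]
  rw [integral_map hcont.aemeasurable]
  · congr 1
    ext x
    congr 1
    have e1 : ∑ i, (toLin' O x) i ^ 2 = ∑ i, x i ^ 2 := by
      have : (O *ᵥ x) ⬝ᵥ (O *ᵥ x) = x ⬝ᵥ x := by
        rw [Matrix.dotProduct_mulVec, Matrix.vecMul_mulVec, hO', ← Matrix.dotProduct_mulVec]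
        simp
      simpa [dotProduct, sq] using this
    have e2 : (toLin' O x) ⬝ᵥ S *ᵥ (toLin' O x) = ∑ i, lam i * x i ^ 2 := by
      rw [toLin'_apply, hdiag, Matrix.mulVec_mulVec, Matrix.mul_assoc, hO', Matrix.mul_one,
        ← Matrix.mulVec_mulVec, Matrix.dotProduct_mulVec, Matrix.vecMul_mulVec, hO',
        ← Matrix.dotProduct_mulVec, Matrix.one_mulVec]
      simp only [dotProduct, Matrix.mulVec_diagonal]
      exact Finset.sum_congr rfl fun i _ => by ring
    rw [e1, e2]
    push_cast
    rw [Finset.mul_sum, Finset.mul_sum, ← Finset.sum_neg_distrib, ← Finset.sum_neg_distrib,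
      ← Finset.sum_add_distrib]
    exact Finset.sum_congr rfl fun i _ => by ring
  · apply Continuous.aestronglyMeasurable
    simp only [dotProduct, Matrix.mulVec]
    fun_prop


/-- The Fresnel (Gauss-type) normalization integral: the regularized
integrals `∫ exp(−ε‖x‖² + (i/2)⟨x,Sx⟩) dx` converge, as `ε → 0⁺`, to
`∏_k √(2π/|λ_k|)·e^{iπ·sgn(λ_k)/4}`, which equals
`(2π)^{n/2}·|det S|^{−1/2}·e^{iπσ(S)/4}` and also `∏_k √(2π)·(−iλ_k)^{−1/2}`
(with principal powers), `λ_k` being the eigenvalues of the symmetric invertible matrix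
`S`, listed with multiplicity via an orthogonal diagonalization. -/
theorem stmt_7
    (n : ℕ) (S : Matrix (Fin n) (Fin n) ℝ) (hS : S.IsSymm) (hSdet : IsUnit S.det)
    (lam : Fin n → ℝ) (O : Matrix (Fin n) (Fin n) ℝ)
    (hO : O * Oᵀ = 1) (hdiag : S = O * Matrix.diagonal lam * Oᵀ) :
    Filter.Tendsto
      (fun ε : ℝ => ∫ x : Fin n → ℝ,
        Complex.exp (((-(ε * ∑ i, x i ^ 2) : ℝ) : ℂ) +
          Complex.I / 2 * ((x ⬝ᵥ S.mulVec x : ℝ) : ℂ)))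
      (nhdsWithin 0 (Set.Ioi 0))
      (nhds (∏ k, ((Real.sqrt (2 * π / |lam k|) : ℂ) *
        Complex.exp (Complex.I * (π : ℂ) * ((Real.sign (lam k) : ℝ) : ℂ) / 4)))) ∧
    (∏ k, ((Real.sqrt (2 * π / |lam k|) : ℂ) *
        Complex.exp (Complex.I * (π : ℂ) * ((Real.sign (lam k) : ℝ) : ℂ) / 4))) =
      (((2 * π) ^ ((n : ℝ) / 2) : ℝ) : ℂ) * ((|S.det| ^ (-(1 / 2 : ℝ)) : ℝ) : ℂ) *
        Complex.exp (Complex.I * (π : ℂ) *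
          ((((Finset.univ.filter fun k => 0 < lam k).card : ℤ) -
            ((Finset.univ.filter fun k => lam k < 0).card : ℤ) : ℤ) : ℂ) / 4) ∧
    (∏ k, ((Real.sqrt (2 * π / |lam k|) : ℂ) *
        Complex.exp (Complex.I * (π : ℂ) * ((Real.sign (lam k) : ℝ) : ℂ) / 4))) =
      ∏ k, ((Real.sqrt (2 * π) : ℂ) * (-Complex.I * (lam k : ℂ)) ^ (-(1 / 2 : ℂ))) := by
  have hdetS : S.det = ∏ k, lam k := by
    have hd : O.det * O.det = 1 := by
      have := congrArg Matrix.det hO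
      simpa using this
    rw [hdiag]
    simp only [Matrix.det_mul, Matrix.det_transpose, Matrix.det_diagonal]
    linear_combination (∏ k, lam k) * hd
  have hlam : ∀ k, lam k ≠ 0 := by
    have h := hSdet.ne_zero
    rw [hdetS] at h
    exact fun k => Finset.prod_ne_zero_iff.mp h k (Finset.mem_univ k)
  refine ⟨?_, ?_, ?_⟩
  · refine Filter.Tendsto.congr' ?_ (tendsto_finsetProd _ fun k _ => aux_lim (lam k) (hlam k))
    filter_upwards [self_mem_nhdsWithin] with ε hε
    exact (aux_int n S lam O hO hdiag ε hε).symm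
  · rw [Finset.prod_mul_distrib, ← Complex.exp_sum]
    congr 1
    · rw [← Complex.ofReal_mul, ← Complex.ofReal_prod]
      congr 1
      have h2 : ∀ k, Real.sqrt (2 * π / |lam k|) = (2 * π) ^ (1 / 2 : ℝ) * |lam k| ^ (-(1 / 2 : ℝ)) := by
        intro k
        rw [Real.sqrt_div (by positivity), Real.sqrt_eq_rpow, Real.sqrt_eq_rpow,
          Real.rpow_neg (abs_nonneg _), div_eq_mul_inv]
      rw [Finset.prod_congr rfl fun k _ => h2 k, Finset.prod_mul_distrib, hdetS, Finset.abs_prod,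
        Real.finsetProd_rpow _ _ (fun k _ => abs_nonneg _)]
      congr 1
      rw [Finset.prod_const, Finset.card_univ, Fintype.card_fin, ← Real.rpow_natCast,
        ← Real.rpow_mul (by positivity)]
      congr 1
      ring
    · congr 1
      rw [← Finset.sum_div, ← Finset.mul_sum]
      congr 2
      rw [Finset.card_filter, Finset.card_filter]
      push_cast
      rw [← Finset.sum_sub_distrib]
      refine Finset.sum_congr rfl fun k _ => ?_
      rcases lt_or_gt_of_ne (hlam k) with h | h
      · simp [Real.sign_of_neg h, h, h.le, not_lt.mpr h.le]
      · simp [Real.sign_of_pos h, h, not_lt.mpr h.le]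
  · exact Finset.prod_congr rfl fun k _ => aux_two (lam k) (hlam k)
end

section
/- The limit lim_{ε→0⁺} ∫₀¹ π( Ω(γ_ε(s))⁻¹ · (d/ds)[Ω(γ_ε(s))] ) ds exists; in fact it equals the value ∫₀¹ t(γ_ε(s))⁻¹ · (d/ds)[t(γ_ε(s))] ds, which is the same for every ε ∈ (0,r). -/
/-- The circle of radius `ε` around the origin of `ℝ²`, parametrized by `[0,1]`. -/
noncomputable def circleLoop (ε s : ℝ) : ℝ × ℝ :=
  (ε * Real.cos (2 * Real.pi * s), ε * Real.sin (2 * Real.pi * s))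

/-- The open disc `B_r` of (Euclidean) radius `r` around `0 ∈ ℝ²`. -/
def openDisc (r : ℝ) : Set (ℝ × ℝ) :=
  {x | x.1 ^ 2 + x.2 ^ 2 < r ^ 2}

/-- The punctured open disc `B_r \ {0}` of (Euclidean) radius `r` around `0 ∈ ℝ²`. -/
def puncturedDisc (r : ℝ) : Set (ℝ × ℝ) :=
  {x | x.1 ^ 2 + x.2 ^ 2 < r ^ 2 ∧ x ≠ 0}

lemma alg_aux {N : ℕ} (π' : Matrix (Fin N) (Fin N) ℝ →ₗ[ℝ] Matrix (Fin N) (Fin N) ℝ)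
    (O t dO dt : Matrix (Fin N) (Fin N) ℝ) (hO : IsUnit O)
    (hx : π' (t⁻¹ * (O⁻¹ * dO) * t) = π' (O⁻¹ * dO)) (hf : π' (t⁻¹ * dt) = t⁻¹ * dt) :
    π' ((O * t)⁻¹ * (dO * t + O * dt)) = π' (O⁻¹ * dO) + t⁻¹ * dt := by
  have hu0 : O⁻¹ * O = 1 := Matrix.nonsing_inv_mul _ ((Matrix.isUnit_iff_isUnit_det _).mp hO)
  rw [← hx]
  conv_rhs => rw [← hf]
  rw [← map_add]
  congr 1
  rw [Matrix.mul_inv_rev, mul_add]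
  congr 1
  · simp only [mul_assoc]
  · rw [mul_assoc, ← mul_assoc O⁻¹, hu0, one_mul]

section
open Set Filter Topology MeasureTheory
lemma two_le_inf' : (2 : WithTop ℕ∞) ≤ ((⊤ : ℕ∞) : WithTop ℕ∞) := by
  have : ((2 : ℕ∞) : WithTop ℕ∞) ≤ ((⊤ : ℕ∞) : WithTop ℕ∞) := WithTop.coe_le_coe.mpr le_top
  exact this

lemma two_le_inf : (1 + 1 : WithTop ℕ∞) ≤ ((⊤ : ℕ∞) : WithTop ℕ∞) := by
  rw [one_add_one_eq_two]; exact two_le_inf'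

section
variable {A : Type*} [NormedRing A] [NormedAlgebra ℝ A] [CompleteSpace A]

lemma aux_comm (W : ℝ × ℝ → A) (U : Set (ℝ × ℝ)) (hU : IsOpen U) (c : A) (p : ℝ × ℝ) (hp : p ∈ U)
    (hd : DifferentiableAt ℝ W p) (hc : ∀ q ∈ U, Commute c (W q)) (v : ℝ × ℝ) :
    Commute c (fderiv ℝ W p v) := by
  have h1 : (fun q => c * W q) =ᶠ[𝓝 p] fun q => W q * c := by
    filter_upwards [hU.mem_nhds hp] with q hq using hc q hq
  have h2 := h1.fderiv_eq (𝕜 := ℝ)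
  have h3 := congrArg (fun L : ℝ × ℝ →L[ℝ] A => L v)
    (((hd.hasFDerivAt.const_mul c).fderiv).symm.trans (h2.trans (hd.hasFDerivAt.mul_const' c).fderiv))
  exact (show c * _ = _ * c by simpa using h3)

/-- inverse times partial derivative -/
noncomputable def logD (W : ℝ × ℝ → A) (v : ℝ × ℝ) (p : ℝ × ℝ) : A :=
  Ring.inverse (W p) * fderiv ℝ W p v

lemma logD_contDiffOn (W : ℝ × ℝ → A) (U : Set (ℝ × ℝ)) (hU : IsOpen U)
    (hW : ContDiffOn ℝ (⊤ : ℕ∞) W U) (hu : ∀ p ∈ U, IsUnit (W p)) (v : ℝ × ℝ) :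
    ContDiffOn ℝ 1 (logD W v) U := by
  intro p hp
  apply ContDiffAt.contDiffWithinAt
  have hWp := hW.contDiffAt (hU.mem_nhds hp)
  obtain ⟨u, hu'⟩ := hu p hp
  have h1 : ContDiffAt ℝ 1 (fun q => Ring.inverse (W q)) p := by
    have := contDiffAt_ringInverse (n := 1) ℝ u
    rw [hu'] at this
    exact this.comp p (hWp.of_le (by exact_mod_cast le_top))
  have h2 : ContDiffAt ℝ 1 (fun q => fderiv ℝ W q v) p :=
    (hWp.fderiv_right (m := 1) two_le_inf).clm_apply contDiffAt_const
  exact h1.mul h2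

lemma logD_cont (W : ℝ × ℝ → A) (U : Set (ℝ × ℝ)) (hU : IsOpen U)
    (hW : ContDiffOn ℝ (⊤ : ℕ∞) W U) (hu : ∀ p ∈ U, IsUnit (W p)) :
    ContinuousOn (fun q : (ℝ × ℝ) × (ℝ × ℝ) => logD W q.2 q.1) (U ×ˢ univ) := by
  rintro ⟨p, v⟩ ⟨hp, -⟩
  apply ContinuousAt.continuousWithinAt
  have hWp := hW.contDiffAt (hU.mem_nhds hp)
  obtain ⟨u, hu'⟩ := hu p hp
  have h1 : ContinuousAt (fun q => Ring.inverse (W q)) p := by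
    have := NormedRing.inverse_continuousAt u
    rw [hu'] at this
    exact ContinuousAt.comp (f := W) this hWp.continuousAt
  have h2 : ContinuousAt (fderiv ℝ W) p :=
    (hWp.fderiv_right (m := 1) two_le_inf).continuousAt
  have h3 : ContinuousAt (Prod.fst : (ℝ × ℝ) × (ℝ × ℝ) → ℝ × ℝ) (p, v) := continuousAt_fst
  have h4 : ContinuousAt (Prod.snd : (ℝ × ℝ) × (ℝ × ℝ) → ℝ × ℝ) (p, v) := continuousAt_snd
  exact (ContinuousAt.comp (f := Prod.fst) (x := (p, v)) h1 h3).mul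
    ((ContinuousAt.comp (f := Prod.fst) (x := (p, v)) h2 h3).clm_apply h4)

lemma logD_fderiv (W : ℝ × ℝ → A) (U : Set (ℝ × ℝ)) (hU : IsOpen U)
    (hW : ContDiffOn ℝ (⊤ : ℕ∞) W U) (hu : ∀ p ∈ U, IsUnit (W p)) (v w : ℝ × ℝ) 
    (p : ℝ × ℝ) (hp : p ∈ U) :
    fderiv ℝ (logD W v) p w = Ring.inverse (W p) * fderiv ℝ (fderiv ℝ W) p w v
      - Ring.inverse (W p) * fderiv ℝ W p w * Ring.inverse (W p) * fderiv ℝ W p v := by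
  have hWp := hW.contDiffAt (hU.mem_nhds hp)
  obtain ⟨u, hu'⟩ := hu p hp
  have h0 : HasFDerivAt W (fderiv ℝ W p) p :=
    (hWp.differentiableAt (by simp)).hasFDerivAt
  have h1 := hasFDerivAt_ringInverse (𝕜 := ℝ) u
  rw [hu'] at h1
  have h2 : HasFDerivAt (fun q => fderiv ℝ W q v)  _ p :=
    ((hWp.fderiv_right (m := 1) two_le_inf).differentiableAt
      (by simp)).hasFDerivAt.clm_apply (hasFDerivAt_const v p)
  have h3 := (h1.comp p h0).mul' h2
  have h4 : HasFDerivAt (logD W v) _ p := h3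
  rw [h4.fderiv]
  simp [← hu', mul_assoc, sub_eq_add_neg]

lemma logD_symm (W : ℝ × ℝ → A) (U : Set (ℝ × ℝ)) (hU : IsOpen U)
    (hW : ContDiffOn ℝ (⊤ : ℕ∞) W U) (hu : ∀ p ∈ U, IsUnit (W p))
    (hc : ∀ p ∈ U, ∀ q ∈ U, Commute (W p) (W q)) (v w : ℝ × ℝ) 
    (p : ℝ × ℝ) (hp : p ∈ U) :
    fderiv ℝ (logD W v) p w = fderiv ℝ (logD W w) p v := by
  have hWp := hW.contDiffAt (hU.mem_nhds hp)
  have hd := hWp.differentiableAt (by simp)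
  rw [logD_fderiv W U hU hW hu v w p hp, logD_fderiv W U hU hW hu w v p hp]
  have hs : fderiv ℝ (fderiv ℝ W) p w v = fderiv ℝ (fderiv ℝ W) p v w :=
    (hWp.isSymmSndFDerivAt (by simpa using two_le_inf')) w v
  have hv : ∀ q ∈ U, ∀ v, Commute (W q) (fderiv ℝ W p v) := fun q hq v =>
    aux_comm W U hU (W q) p hp hd (fun q' hq' => hc q hq q' hq') v
  have hvw : Commute (fderiv ℝ W p w) (fderiv ℝ W p v) :=
    aux_comm W U hU _ p hp hd (fun q hq => (hv q hq w).symm) v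
  have hi : ∀ v, Commute (Ring.inverse (W p)) (fderiv ℝ W p v) := fun v =>
    by
      obtain ⟨u, hu'⟩ := hu p hp
      have := hv p hp v
      rw [← hu'] at this ⊢
      rw [Ring.inverse_unit]
      exact this.units_inv_left
  rw [hs]
  congr 1
  rw [mul_assoc (_ * _), mul_assoc (_ * _)]
  exact (((Commute.refl _).mul_right (hi v)).mul_left ((hi w).symm.mul_right hvw)).eq

lemma homot (W : ℝ × ℝ → A) (r : ℝ)
    (hW : ContDiffOn ℝ (⊤ : ℕ∞) W (Ioo 0 r ×ˢ univ)) (hu : ∀ p ∈ Ioo 0 r ×ˢ univ, IsUnit (W p))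
    (hc : ∀ p ∈ Ioo 0 r ×ˢ univ, ∀ q ∈ Ioo 0 r ×ˢ univ, Commute (W p) (W q))
    (hper : ∀ p, W (p + (0, 1)) = W p) (a b : ℝ) (ha : a ∈ Ioo 0 r) (hb : b ∈ Ioo 0 r) :
    ∫ s in (0:ℝ)..1, logD W (0, 1) (a, s) = ∫ s in (0:ℝ)..1, logD W (0, 1) (b, s) := by
  set U : Set (ℝ × ℝ) := Ioo 0 r ×ˢ univ with hUdef
  have hU : IsOpen U := isOpen_Ioo.prod isOpen_univ
  have hsub : uIcc a b ×ˢ uIcc (0:ℝ) 1 ⊆ U :=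
    Set.prod_mono (ordConnected_Ioo.uIcc_subset ha hb) (subset_univ _)
  have hC := logD_contDiffOn W U hU hW hu
  have hd : ∀ v, ∀ p ∈ U, HasFDerivAt (logD W v) (fderiv ℝ (logD W v) p) p := fun v p hp =>
    (((hC v).contDiffAt (hU.mem_nhds hp)).differentiableAt (by simp)).hasFDerivAt
  have hz : ∀ p ∈ U, fderiv ℝ (logD W (0,1)) p (1, 0) + 
     (-fderiv ℝ (logD W (1,0)) p) (0, 1) = 0 := fun p hp => by
    rw [logD_symm W U hU hW hu hc (0,1) (1,0) p hp]; simp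
  have hsub' : Ioo (min a b) (max a b) ×ˢ Ioo (min (0:ℝ) 1) (max 0 1) ⊆ U :=
    (Set.prod_mono Ioo_subset_Icc_self Ioo_subset_Icc_self).trans hsub
  have key := integral2_divergence_prod_of_hasFDerivAt_off_countable
    (logD W (0,1)) (fun p => - logD W (1,0) p) (fderiv ℝ (logD W (0,1))) 
    (fun p => - fderiv ℝ (logD W (1,0)) p) a 0 b 1 ∅ countable_empty
    ((hC _).continuousOn.mono hsub) ((hC _).continuousOn.neg.mono hsub)
    (fun p hp => hd _ p (hsub' hp.1)) (fun p hp => (hd _ p (hsub' hp.1)).neg)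
    (integrableOn_zero.congr_fun (fun p hp => (hz p (hsub hp)).symm) 
      (measurableSet_uIcc.prod measurableSet_uIcc))
  have hl : ∫ x in a..b, ∫ y in (0:ℝ)..1, fderiv ℝ (logD W (0,1)) (x, y) (1, 0) + 
     (-fderiv ℝ (logD W (1,0)) (x, y)) (0, 1) = 0 := by
    rw [intervalIntegral.integral_congr (g := fun _ => (0:A))]
    · simp
    intro x hx
    simp only
    rw [intervalIntegral.integral_congr (g := fun _ => (0:A))]
    · simp
    intro y hy
    exact hz (x, y) (hsub ⟨hx, hy⟩)
  rw [hl] at key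
  have hp : ∀ x, logD W (1,0) (x, 1) = logD W (1,0) (x, 0) := by
    intro x
    have h1 : (x, (1:ℝ)) = (x, 0) + (0, 1) := by simp
    have h2 : fderiv ℝ W ((x, (0:ℝ)) + (0, 1)) = fderiv ℝ W (x, 0) := by
      rw [← fderiv_comp_add_right]
      congr 1
      funext p; exact hper p
    unfold logD
    rw [h1, hper, h2]
  simp only [hp, sub_self, zero_add] at key
  exact (sub_eq_zero.mp key.symm).symm
end

section
attribute [local instance] Matrix.linftyOpNormedRing Matrix.linftyOpNormedAlgebra

variable {N : ℕ}

noncomputable def entryC (i j : Fin N) : Matrix (Fin N) (Fin N) ℝ →L[ℝ] ℝ :=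
  LinearMap.toContinuousLinearMap (Matrix.entryLinearMap ℝ ℝ i j)

lemma entryC_apply (i j : Fin N) (M : Matrix (Fin N) (Fin N) ℝ) : entryC i j M = M i j := rfl

lemma mat_contDiffOn (f : ℝ × ℝ → Matrix (Fin N) (Fin N) ℝ) (U : Set (ℝ × ℝ))
    (h : ∀ i j, ContDiffOn ℝ (⊤ : ℕ∞) (fun x => f x i j) U) : ContDiffOn ℝ (⊤ : ℕ∞) f U := by
  have : f = fun x => ∑ i, ∑ j, (f x i j) • Matrix.single i j (1 : ℝ) := by
    funext x
    conv_lhs => rw [Matrix.matrix_eq_sum_single (f x)]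
    simp [Matrix.smul_single]
  rw [this]
  exact ContDiffOn.sum fun i _ => ContDiffOn.sum fun j _ => (h i j).smul contDiffOn_const

lemma entry_fderiv (f : ℝ × ℝ → Matrix (Fin N) (Fin N) ℝ) (x v : ℝ × ℝ)
    (h : DifferentiableAt ℝ f x) :
    (Matrix.of fun i j => fderiv ℝ (fun y => f y i j) x v) = fderiv ℝ f x v := by
  ext i j
  have := ((entryC i j).hasFDerivAt.comp x h.hasFDerivAt)
  have h2 : HasFDerivAt (fun y => f y i j) _ x := this
  rw [Matrix.of_apply, h2.fderiv]
  rfl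

lemma entry_deriv (f : ℝ → Matrix (Fin N) (Fin N) ℝ) (s : ℝ) (f' : Matrix (Fin N) (Fin N) ℝ)
    (h : HasDerivAt f f' s) :
    (Matrix.of fun i j => deriv (fun y => f y i j) s) = f' := by
  ext i j
  have h2 : HasDerivAt (fun y => f y i j) (f' i j) s :=
    (entryC i j).hasFDerivAt.comp_hasDerivAt s h
  rw [Matrix.of_apply, h2.deriv]

noncomputable def tang (s : ℝ) : ℝ × ℝ :=
  (-(Real.sin (2 * Real.pi * s) * (2 * Real.pi)), Real.cos (2 * Real.pi * s) * (2 * Real.pi))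

lemma circleLoop_hasDerivAt (ε s : ℝ) : HasDerivAt (circleLoop ε) (ε • tang s) s := by
  have h0 : HasDerivAt (fun s : ℝ => 2 * Real.pi * s) (2 * Real.pi) s := by
    simpa using (hasDerivAt_id s).const_mul (2 * Real.pi)
  have := (h0.cos.const_mul ε).prodMk (h0.sin.const_mul ε)
  have e : ε • tang s = (ε * (-Real.sin (2 * Real.pi * s) * (2 * Real.pi)),
      ε * (Real.cos (2 * Real.pi * s) * (2 * Real.pi))) := by
    simp only [tang, Prod.smul_mk, smul_eq_mul, neg_mul]
  rw [e]
  exact this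

lemma tang_norm (s : ℝ) : ‖tang s‖ ≤ 2 * Real.pi := by
  have := Real.pi_pos
  rw [tang, Prod.norm_def]
  apply max_le
  · rw [norm_neg, norm_mul, Real.norm_eq_abs, Real.norm_of_nonneg (by positivity : 0 ≤ 2 * Real.pi)]
    exact mul_le_of_le_one_left (by positivity) (Real.abs_sin_le_one _)
  · rw [norm_mul, Real.norm_eq_abs, Real.norm_of_nonneg (by positivity : 0 ≤ 2 * Real.pi)]
    exact mul_le_of_le_one_left (by positivity) (Real.abs_cos_le_one _)

lemma tang_cont : Continuous tang := by
  unfold tang; fun_prop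

lemma circleLoop_cont (ε : ℝ) : Continuous (circleLoop ε) := by
  unfold circleLoop; fun_prop

lemma circleLoop_contDiff : ContDiff ℝ (⊤ : ℕ∞) (fun p : ℝ × ℝ => circleLoop p.1 p.2) := by
  unfold circleLoop; fun_prop

lemma circleLoop_sq (ε s : ℝ) : (circleLoop ε s).1 ^ 2 + (circleLoop ε s).2 ^ 2 = ε ^ 2 := by
  have := Real.sin_sq_add_cos_sq (2 * Real.pi * s)
  simp only [circleLoop]
  linear_combination ε ^ 2 * this

lemma circleLoop_mem {r ε : ℝ} (h : ε ∈ Ioo 0 r) (s : ℝ) : circleLoop ε s ∈ puncturedDisc r := by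
  refine ⟨?_, ?_⟩
  · rw [circleLoop_sq]
    exact pow_lt_pow_left₀ h.2 h.1.le (by norm_num)
  · intro h0
    have := circleLoop_sq ε s
    rw [h0] at this
    have h1 := h.1
    simp only [Prod.fst_zero, Prod.snd_zero] at this
    nlinarith

lemma openDisc_open (r : ℝ) : IsOpen (openDisc r) := by
  unfold openDisc
  exact isOpen_lt (by fun_prop) (by fun_prop)

lemma puncturedDisc_open (r : ℝ) : IsOpen (puncturedDisc r) := by
  have : puncturedDisc r = openDisc r ∩ {0}ᶜ := rfl
  rw [this]
  exact (openDisc_open r).inter isOpen_compl_singleton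

lemma punct_sub (r : ℝ) : puncturedDisc r ⊆ openDisc r := fun _ h => h.1

lemma closedDisc_compact (r : ℝ) : IsCompact {x : ℝ × ℝ | x.1 ^ 2 + x.2 ^ 2 ≤ r ^ 2} := by
  refine Metric.isCompact_of_isClosed_isBounded
    (isClosed_le (by fun_prop) (by fun_prop)) ?_
  refine (Metric.isBounded_closedBall (x := (0 : ℝ × ℝ)) (r := |r|)).subset ?_
  intro x hx
  rw [mem_closedBall_zero_iff, Prod.norm_def]
  simp only [mem_ofPred_eq] at hx
  exact max_le (sq_le_sq.mp (by nlinarith [sq_nonneg x.2])) (sq_le_sq.mp (by nlinarith [sq_nonneg x.1]))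

lemma loop_deriv (f : ℝ × ℝ → Matrix (Fin N) (Fin N) ℝ) (ε s : ℝ)
    (h : DifferentiableAt ℝ f (circleLoop ε s)) :
    HasDerivAt (fun u => f (circleLoop ε u)) (fderiv ℝ f (circleLoop ε s) (ε • tang s)) s :=
  h.hasFDerivAt.comp_hasDerivAt s (circleLoop_hasDerivAt ε s)

lemma polar_logD (f : ℝ × ℝ → Matrix (Fin N) (Fin N) ℝ) (ε s : ℝ)
    (h : DifferentiableAt ℝ f (circleLoop ε s)) :
    logD (fun p => f (circleLoop p.1 p.2)) (0, 1) (ε, s) =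
      logD f (ε • tang s) (circleLoop ε s) := by
  unfold logD
  congr 1
  have h1 : HasFDerivAt (fun p : ℝ × ℝ => f (circleLoop p.1 p.2)) _ (ε, s) :=
    (DifferentiableAt.comp (f := fun p : ℝ × ℝ => circleLoop p.1 p.2) (ε, s) h
      (circleLoop_contDiff.differentiable (by simp) (ε, s))).hasFDerivAt
  have h2 : HasDerivAt (fun u : ℝ => (ε, u)) (0, 1) s :=
    (hasDerivAt_const s ε).prodMk (hasDerivAt_id s)
  exact (h1.comp_hasDerivAt s h2).unique (loop_deriv f ε s h)

theorem main_aux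
    (N : ℕ) (hN : 0 < N) (r : ℝ) (hr : 0 < r)
    (Ω₀ : ℝ × ℝ → Matrix (Fin N) (Fin N) ℝ)
    (hΩ₀s : ∀ i j, ContDiffOn ℝ (⊤ : ℕ∞) (fun x => Ω₀ x i j) (openDisc r))
    (hΩ₀u : ∀ x ∈ openDisc r, IsUnit (Ω₀ x))
    (t : ℝ × ℝ → Matrix (Fin N) (Fin N) ℝ)
    (hts : ∀ i j, ContDiffOn ℝ (⊤ : ℕ∞) (fun x => t x i j) (puncturedDisc r))
    (htu : ∀ x ∈ puncturedDisc r, IsUnit (t x))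
    (htc : ∀ x ∈ puncturedDisc r, ∀ y ∈ puncturedDisc r, t x * t y = t y * t x)
    (π' : Matrix (Fin N) (Fin N) ℝ →ₗ[ℝ] Matrix (Fin N) (Fin N) ℝ)
    (hconj : ∀ x ∈ puncturedDisc r, ∀ X : Matrix (Fin N) (Fin N) ℝ,
      π' ((t x)⁻¹ * X * t x) = π' X)
    (hfix : ∀ x ∈ puncturedDisc r, ∀ v : ℝ × ℝ,
      π' ((t x)⁻¹ * Matrix.of fun i j => fderiv ℝ (fun y => t y i j) x v) =
        (t x)⁻¹ * Matrix.of fun i j => fderiv ℝ (fun y => t y i j) x v) :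
    ∃ L : Matrix (Fin N) (Fin N) ℝ,
      (∀ ε ∈ Set.Ioo (0 : ℝ) r,
        (Matrix.of fun i j => ∫ s in (0 : ℝ)..1,
          ((t (circleLoop ε s))⁻¹ *
            Matrix.of fun i' j' => deriv (fun u => t (circleLoop ε u) i' j') s) i j) = L) ∧
      Filter.Tendsto
        (fun ε : ℝ => Matrix.of fun i j => ∫ s in (0 : ℝ)..1,
          (π' ((Ω₀ (circleLoop ε s) * t (circleLoop ε s))⁻¹ *
            Matrix.of fun i' j' =>
              deriv (fun u => (Ω₀ (circleLoop ε u) * t (circleLoop ε u)) i' j') s)) i j)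
        (nhdsWithin 0 (Set.Ioi 0)) (nhds L) := by
  have hT := mat_contDiffOn t _ hts
  have hO := mat_contDiffOn Ω₀ _ hΩ₀s
  have hTd : ∀ x ∈ puncturedDisc r, DifferentiableAt ℝ t x := fun x hx =>
    (hT.contDiffAt ((puncturedDisc_open r).mem_nhds hx)).differentiableAt (by simp)
  have hOd : ∀ x ∈ openDisc r, DifferentiableAt ℝ Ω₀ x := fun x hx =>
    (hO.contDiffAt ((openDisc_open r).mem_nhds hx)).differentiableAt (by simp)
  set W : ℝ × ℝ → Matrix (Fin N) (Fin N) ℝ := fun p => t (circleLoop p.1 p.2) with hWdef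
  have hmem : ∀ p ∈ Ioo 0 r ×ˢ (univ : Set ℝ), circleLoop p.1 p.2 ∈ puncturedDisc r :=
    fun p hp => circleLoop_mem hp.1 p.2
  have hW : ContDiffOn ℝ (⊤ : ℕ∞) W (Ioo 0 r ×ˢ univ) :=
    hT.comp circleLoop_contDiff.contDiffOn hmem
  have hWu : ∀ p ∈ Ioo 0 r ×ˢ (univ : Set ℝ), IsUnit (W p) := fun p hp => htu _ (hmem p hp)
  have hper : ∀ p, W (p + (0, 1)) = W p := by
    intro p
    simp only [hWdef, circleLoop, Prod.fst_add, Prod.snd_add, mul_add, mul_one, add_zero,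
      Real.cos_add_two_pi, Real.sin_add_two_pi]
  have hhom := homot W r hW hWu (fun p hp q hq => htc _ (hmem p hp) _ (hmem q hq)) hper
  have hUo : IsOpen (Ioo 0 r ×ˢ (univ : Set ℝ)) := isOpen_Ioo.prod isOpen_univ
  have hcont : ∀ ε ∈ Ioo 0 r, Continuous (fun s => logD W (0, 1) (ε, s)) := fun ε hε =>
    (logD_contDiffOn W _ hUo hW hWu (0, 1)).continuousOn.comp_continuous
      (by fun_prop) (fun s => ⟨hε, mem_univ _⟩)
  have hr2 : r / 2 ∈ Ioo 0 r := ⟨by linarith, by linarith⟩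
  have hint : ∀ ε ∈ Ioo 0 r, ∀ i j, ∫ s in (0:ℝ)..1, logD W (0, 1) (ε, s) i j =
      (∫ s in (0:ℝ)..1, logD W (0, 1) (r / 2, s)) i j := by
    intro ε hε i j
    rw [← hhom ε (r / 2) hε hr2]
    exact (entryC i j).intervalIntegral_comp_comm ((hcont ε hε).intervalIntegrable 0 1)
  refine ⟨∫ s in (0:ℝ)..1, logD W (0, 1) (r / 2, s), ?_, ?_⟩
  · intro ε hε
    ext i j
    rw [Matrix.of_apply, ← hint ε hε i j]
    refine intervalIntegral.integral_congr fun s _ => ?_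
    have hd := hTd _ (circleLoop_mem hε s)
    beta_reduce
    rw [entry_deriv _ s _ (loop_deriv t ε s hd), hWdef, polar_logD t ε s hd, logD,
      Matrix.nonsing_inv_eq_ringInverse]
    rfl
  · have hOu := logD_cont Ω₀ _ (openDisc_open r) hO hΩ₀u
    have hπ : Continuous π' := LinearMap.continuous_of_finiteDimensional π'
    have hpt : ∀ ε ∈ Ioo 0 r, ∀ s, π' ((Ω₀ (circleLoop ε s) * t (circleLoop ε s))⁻¹ *
            Matrix.of fun i' j' =>
              deriv (fun u => (Ω₀ (circleLoop ε u) * t (circleLoop ε u)) i' j') s) =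
        ε • π' (logD Ω₀ (tang s) (circleLoop ε s)) + logD W (0, 1) (ε, s) := by
      intro ε hε s
      have hm := circleLoop_mem hε s
      have hd := hTd _ hm
      have hd0 := hOd _ (punct_sub r hm)
      have e1 := (loop_deriv Ω₀ ε s hd0).mul (loop_deriv t ε s hd)
      rw [entry_deriv (fun u => Ω₀ (circleLoop ε u) * t (circleLoop ε u)) s _ e1,
        hWdef, polar_logD t ε s hd]
      have hf := hfix _ hm (ε • tang s)
      rw [entry_fderiv t _ _ hd] at hf
      have hx := hconj _ hm ((Ω₀ (circleLoop ε s))⁻¹ * fderiv ℝ Ω₀ (circleLoop ε s) (ε • tang s))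
      have key := alg_aux π' _ _ _ _ (hΩ₀u _ (punct_sub r hm)) hx hf
      unfold logD
      rw [← Matrix.nonsing_inv_eq_ringInverse, ← Matrix.nonsing_inv_eq_ringInverse, ← map_smul π',
        ← mul_smul_comm, ← map_smul]
      exact key
    refine tendsto_pi_nhds.mpr fun i => tendsto_pi_nhds.mpr fun j => ?_
    have hK : IsCompact ({x : ℝ × ℝ | x.1 ^ 2 + x.2 ^ 2 ≤ (r / 2) ^ 2} ×ˢ
        Metric.closedBall (0 : ℝ × ℝ) (2 * Real.pi)) :=
      (closedDisc_compact _).prod (isCompact_closedBall _ _)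
    have hcE : Continuous fun M : Matrix (Fin N) (Fin N) ℝ => (π' M) i j :=
      (entryC i j).continuous.comp hπ
    obtain ⟨C, hC⟩ := hK.exists_bound_of_continuousOn
      (f := fun q : (ℝ × ℝ) × (ℝ × ℝ) => (π' (logD Ω₀ q.2 q.1)) i j)
      (hcE.comp_continuousOn (hOu.mono (Set.prod_mono (fun x hx => by
        simp only [mem_ofPred_eq] at hx
        exact lt_of_le_of_lt hx (by nlinarith)) (subset_univ _))))
    have hbd : ∀ ε ∈ Ioo 0 (r / 2),
        ‖∫ s in (0:ℝ)..1, (π' (logD Ω₀ (tang s) (circleLoop ε s))) i j‖ ≤ C := by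
      intro ε hε
      have := intervalIntegral.norm_integral_le_of_norm_le_const (a := (0:ℝ)) (b := 1) (C := C)
        (f := fun s => (π' (logD Ω₀ (tang s) (circleLoop ε s))) i j) (fun s _ =>
          hC (circleLoop ε s, tang s) ⟨by
            rw [mem_ofPred_eq, circleLoop_sq]
            exact pow_le_pow_left₀ hε.1.le hε.2.le 2, by
            rw [mem_closedBall_zero_iff]; exact tang_norm s⟩)
      simpa using this
    have hnear : ∀ᶠ ε in 𝓝[>] (0:ℝ), ε ∈ Ioo 0 (r / 2) :=
      Ioo_mem_nhdsGT hr2.1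
    have hval : ∀ᶠ ε in 𝓝[>] (0:ℝ),
        ε * (∫ s in (0:ℝ)..1, (π' (logD Ω₀ (tang s) (circleLoop ε s))) i j)
          + (∫ s in (0:ℝ)..1, logD W (0, 1) (r / 2, s)) i j =
        (Matrix.of fun i j => ∫ s in (0 : ℝ)..1,
          (π' ((Ω₀ (circleLoop ε s) * t (circleLoop ε s))⁻¹ *
            Matrix.of fun i' j' =>
              deriv (fun u => (Ω₀ (circleLoop ε u) * t (circleLoop ε u)) i' j') s)) i j) i j := by
      filter_upwards [hnear] with ε hε
      have hε' : ε ∈ Ioo 0 r := ⟨hε.1, hε.2.trans hr2.2⟩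
      rw [Matrix.of_apply, ← hint ε hε' i j, ← intervalIntegral.integral_const_mul,
        ← intervalIntegral.integral_add]
      · refine intervalIntegral.integral_congr fun s _ => ?_
        beta_reduce
        rw [hpt ε hε' s]
        rfl
      · apply Continuous.intervalIntegrable
        refine continuous_const.mul (hcE.comp ?_)
        exact hOu.comp_continuous (f := fun s => (circleLoop ε s, tang s))
          ((circleLoop_cont ε).prodMk tang_cont)
          (fun s => ⟨punct_sub r (circleLoop_mem hε' s), mem_univ _⟩)
      · exact ((entryC i j).continuous.comp (hcont ε hε')).intervalIntegrable 0 1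
    refine Tendsto.congr' hval ?_
    have h0 : Tendsto (fun ε : ℝ => ε * (∫ s in (0:ℝ)..1,
        (π' (logD Ω₀ (tang s) (circleLoop ε s))) i j)) (𝓝[>] 0) (𝓝 0) := by
      have hid : Tendsto (fun ε : ℝ => ε * C) (𝓝[>] 0) (𝓝 0) := by
        have : Tendsto (fun ε : ℝ => ε * C) (𝓝 0) (𝓝 (0 * C)) :=
          (continuous_id.mul continuous_const).tendsto 0
        rw [zero_mul] at this
        exact this.mono_left nhdsWithin_le_nhds
      refine squeeze_zero_norm' ?_ hid
      filter_upwards [hnear] with ε hε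
      rw [norm_mul, Real.norm_of_nonneg hε.1.le]
      exact mul_le_mul_of_nonneg_left (hbd ε hε) hε.1.le
    simpa using h0.add_const ((∫ s in (0:ℝ)..1, logD W (0, 1) (r / 2, s)) i j)
end
end

/-- With `Ω = Ω₀·t` (where `Ω₀` is smooth and invertible-valued on the
full disc `B_r`, and `t` is smooth with commuting invertible values on the punctured disc
`B_r^×`) and `π` a linear map on matrices which is invariant under conjugation by the
values of `t` and fixes the logarithmic derivatives of `t`, the limit
`lim_{ε→0⁺} ∫₀¹ π(Ω(γ_ε(s))⁻¹·(d/ds)[Ω(γ_ε(s))]) ds` exists; in fact it equals the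
ε-independent value `∫₀¹ t(γ_ε(s))⁻¹·(d/ds)[t(γ_ε(s))] ds`. -/
theorem stmt_10
    (N : ℕ) (hN : 0 < N) (r : ℝ) (hr : 0 < r)
    (Ω₀ : ℝ × ℝ → Matrix (Fin N) (Fin N) ℝ)
    (hΩ₀s : ∀ i j, ContDiffOn ℝ (⊤ : ℕ∞) (fun x => Ω₀ x i j) (openDisc r))
    (hΩ₀u : ∀ x ∈ openDisc r, IsUnit (Ω₀ x))
    (t : ℝ × ℝ → Matrix (Fin N) (Fin N) ℝ)
    (hts : ∀ i j, ContDiffOn ℝ (⊤ : ℕ∞) (fun x => t x i j) (puncturedDisc r))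
    (htu : ∀ x ∈ puncturedDisc r, IsUnit (t x))
    (htc : ∀ x ∈ puncturedDisc r, ∀ y ∈ puncturedDisc r, t x * t y = t y * t x)
    (π' : Matrix (Fin N) (Fin N) ℝ →ₗ[ℝ] Matrix (Fin N) (Fin N) ℝ)
    (hconj : ∀ x ∈ puncturedDisc r, ∀ X : Matrix (Fin N) (Fin N) ℝ,
      π' ((t x)⁻¹ * X * t x) = π' X)
    (hfix : ∀ x ∈ puncturedDisc r, ∀ v : ℝ × ℝ,
      π' ((t x)⁻¹ * Matrix.of fun i j => fderiv ℝ (fun y => t y i j) x v) =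
        (t x)⁻¹ * Matrix.of fun i j => fderiv ℝ (fun y => t y i j) x v) :
    ∃ L : Matrix (Fin N) (Fin N) ℝ,
      (∀ ε ∈ Set.Ioo (0 : ℝ) r,
        (Matrix.of fun i j => ∫ s in (0 : ℝ)..1,
          ((t (circleLoop ε s))⁻¹ *
            Matrix.of fun i' j' => deriv (fun u => t (circleLoop ε u) i' j') s) i j) = L) ∧
      Filter.Tendsto
        (fun ε : ℝ => Matrix.of fun i j => ∫ s in (0 : ℝ)..1,
          (π' ((Ω₀ (circleLoop ε s) * t (circleLoop ε s))⁻¹ *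
            Matrix.of fun i' j' =>
              deriv (fun u => (Ω₀ (circleLoop ε u) * t (circleLoop ε u)) i' j') s)) i j)
        (nhdsWithin 0 (Set.Ioi 0)) (nhds L) := by
  exact main_aux N hN r hr Ω₀ hΩ₀s hΩ₀u t hts htu htc π' hconj hfix
end

section
/- Assume w is a linear isometry of V with w(Λ) = Λ and m(w·v) = m(v) for all v ∈ V, and assume y ∈ V satisfies ⟨y, λ⟩ ∈ ℤ for every λ ∈ Λ. Then for all η₁, η₂ ∈ V one has m((τ∗η₁ − τ∗η₂)/p) · θ_{τ∗η₁}^{q/p} · θ_{τ∗η₂}^{−q/p} = m((η₁ − η₂)/p) · θ_{η₁}^{q/p} · θ_{η₂}^{−q/p}, where τ∗η := w(η+ρ) + k·y − ρ. -/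
open Real

/-- Invariance of the combined weight-multiplicity/phase quantity
`m((η₁−η₂)/p)·θ_{η₁}^{q/p}·θ_{η₂}^{−q/p}` under the `∗`-action `τ∗η = w(η+ρ)+k·y−ρ`,
where `w` is a linear isometry preserving the weight lattice `Λ` and the multiplicity
function `m`, and `⟨y,λ⟩ ∈ ℤ` for all `λ ∈ Λ`. -/
theorem stmt_15
    (V : Type*) [NormedAddCommGroup V] [InnerProductSpace ℝ V] [FiniteDimensional ℝ V]
    (Λ : AddSubgroup V) (m : V → ℤ) (hm : ∀ v, v ∉ Λ → m v = 0)
    (ρ : V) (k : ℕ) (hk : 0 < k) (p q : ℤ) (hp : p ≠ 0) (hq : q ≠ 0)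
    (w : V →ₗᵢ[ℝ] V) (hwΛ : ⇑w '' (Λ : Set V) = (Λ : Set V)) (hmw : ∀ v, m (w v) = m v)
    (y : V) (hy : ∀ l ∈ Λ, ∃ n : ℤ, (inner ℝ y l : ℝ) = (n : ℝ)) :
    ∀ η₁ η₂ : V,
      ((m ((p : ℝ)⁻¹ • ((w (η₁ + ρ) + (k : ℝ) • y - ρ) - (w (η₂ + ρ) + (k : ℝ) • y - ρ))) : ℂ) *
          Complex.exp ((q : ℂ) * (π : ℂ) * Complex.I / ((p : ℂ) * (k : ℂ)) *
            ((inner ℝ (w (η₁ + ρ) + (k : ℝ) • y - ρ)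
              (w (η₁ + ρ) + (k : ℝ) • y - ρ + (2 : ℝ) • ρ) : ℝ) : ℂ)) *
          Complex.exp (-((q : ℂ) * (π : ℂ) * Complex.I / ((p : ℂ) * (k : ℂ))) *
            ((inner ℝ (w (η₂ + ρ) + (k : ℝ) • y - ρ)
              (w (η₂ + ρ) + (k : ℝ) • y - ρ + (2 : ℝ) • ρ) : ℝ) : ℂ))) =
        (m ((p : ℝ)⁻¹ • (η₁ - η₂)) : ℂ) *
          Complex.exp ((q : ℂ) * (π : ℂ) * Complex.I / ((p : ℂ) * (k : ℂ)) *
            ((inner ℝ η₁ (η₁ + (2 : ℝ) • ρ) : ℝ) : ℂ)) *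
          Complex.exp (-((q : ℂ) * (π : ℂ) * Complex.I / ((p : ℂ) * (k : ℂ))) *
            ((inner ℝ η₂ (η₂ + (2 : ℝ) • ρ) : ℝ) : ℂ)) := by
  intro η₁ η₂
  have key : ∀ η : V, (inner ℝ (w (η + ρ) + (k : ℝ) • y - ρ)
      (w (η + ρ) + (k : ℝ) • y - ρ + (2 : ℝ) • ρ) : ℝ) =
      inner ℝ η (η + (2 : ℝ) • ρ) + 2 * k * inner ℝ y (w (η + ρ)) + k ^ 2 * inner ℝ y y := by
    intro η
    have h := w.inner_map_map (η + ρ) (η + ρ)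
    generalize w (η + ρ) = u at h ⊢
    simp only [inner_add_left, inner_add_right, inner_sub_left, inner_sub_right, inner_smul_left,
      inner_smul_right, conj_trivial] at h ⊢
    have h1 := real_inner_comm u y
    have h2 := real_inner_comm u ρ
    have h3 := real_inner_comm y ρ
    have h4 := real_inner_comm η ρ
    rw [h1, h2, h3]
    rw [h4] at h
    linear_combination h
  have hdiff : (p : ℝ)⁻¹ • ((w (η₁ + ρ) + (k : ℝ) • y - ρ) - (w (η₂ + ρ) + (k : ℝ) • y - ρ))
      = w ((p : ℝ)⁻¹ • (η₁ - η₂)) := by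
    rw [map_smul, map_sub, map_add, map_add]
    congr 1
    abel
  rw [hdiff, hmw, key, key]
  by_cases hl : (p : ℝ)⁻¹ • (η₁ - η₂) ∈ Λ
  · have hwl : w ((p : ℝ)⁻¹ • (η₁ - η₂)) ∈ Λ := by
      have : w ((p : ℝ)⁻¹ • (η₁ - η₂)) ∈ (Λ : Set V) := by
        rw [← hwΛ]
        exact Set.mem_image_of_mem _ hl
      exact this
    obtain ⟨n, hn⟩ := hy _ hwl
    have hpR : (p : ℝ) ≠ 0 := by exact_mod_cast hp
    have hpC : (p : ℂ) ≠ 0 := by exact_mod_cast hp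
    have hkC : (k : ℂ) ≠ 0 := by exact_mod_cast hk.ne'
    have hn' : (inner ℝ y (w (η₁ + ρ)) : ℝ) = inner ℝ y (w (η₂ + ρ)) + p * n := by
      rw [← hn]
      simp only [map_smul, map_sub, map_add, inner_smul_right, inner_sub_right, inner_add_right]
      field_simp
      ring
    rw [hn', mul_assoc (m _ : ℂ), mul_assoc (m _ : ℂ), ← Complex.exp_add, ← Complex.exp_add]
    congr 1
    rw [Complex.exp_eq_exp_iff_exists_int]
    refine ⟨q * n, ?_⟩
    push_cast
    field_simp
    ring
  · rw [hm _ hl]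
    simp
end
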